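/- Let 𝒞 = { Q ∈ Sym₀ : λ₁(Q) = λ₂(Q) }, where λ₁(Q) ≥ λ₂(Q) ≥ λ₃(Q) are the eigenvalues of Q in decreasing order (i.e. the two largest eigenvalues of Q coincide). Then the map Φ : ℝP² × ℝ → Sym₀ defined by Φ([p], t) = e^t·( I − 3·p⊗p ), for p ∈ ℝ³ a unit vector representing the line [p] ∈ ℝP², is a homeomorphism onto 𝒞 ∖ {0}. In particular 𝒞 ∖ {0} is homeomorphic to ℝP² × ℝ. -/

import Mathlib

/- STATEMENT 19: Let 𝒞 = {Q ∈ Sym₀ : λ₁(Q) = λ₂(Q)} (two largest eigenvalues equal).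
Then Φ : ℝP² × ℝ → Sym₀, Φ([p],t) = e^t(I − 3p⊗p) (p a unit representative), is a
homeomorphism onto 𝒞 ∖ {0}; in particular 𝒞 ∖ {0} ≅ ℝP² × ℝ.
ℝP² is the projectivization of ℝ³ with the quotient topology. -/

noncomputable section

open Matrix Set

abbrev Mat3 : Type := Matrix (Fin 3) (Fin 3) ℝ
abbrev V3 : Type := EuclideanSpace ℝ (Fin 3)
abbrev E9 : Type := EuclideanSpace ℝ (Fin 3 × Fin 3)

def toM (A : E9) : Mat3 := Matrix.of fun i j => A (i, j)

def toE (Q : Mat3) : E9 := (WithLp.equiv 2 _).symm (fun p => Q p.1 p.2)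

def Sym0E : Set E9 := {A | (toM A).IsSymm ∧ (toM A).trace = 0}

def unitVec (n : Fin 3 → ℝ) : Prop := ∑ i, (n i) ^ 2 = 1

def IsEigen (Q : Mat3) (μ : ℝ) (v : Fin 3 → ℝ) : Prop := Q.mulVec v = μ • v

/-- The two largest eigenvalues of (the symmetric matrix) Q coincide: the largest
eigenvalue admits two orthonormal eigenvectors. -/
def TwoLargestEqual (Q : Mat3) : Prop :=
  ∃ (lam : ℝ) (v w : Fin 3 → ℝ), unitVec v ∧ unitVec w ∧ (∑ i, v i * w i) = 0 ∧
    IsEigen Q lam v ∧ IsEigen Q lam w ∧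
    ∀ (μ : ℝ) (u : Fin 3 → ℝ), u ≠ 0 → IsEigen Q μ u → μ ≤ lam

/-- The biaxial cone 𝒞 ⊂ Sym₀. -/
def CsetE : Set E9 := {A | A ∈ Sym0E ∧ TwoLargestEqual (toM A)}

/-- ℝP² with the quotient topology. -/
noncomputable instance : TopologicalSpace (Projectivization ℝ V3) :=
  instTopologicalSpaceQuotient

lemma toE_apply (Q : Mat3) (i j : Fin 3) : toE Q (i, j) = Q i j := rfl

lemma toM_toE (Q : Mat3) : toM (toE Q) = Q := rfl

def hV (p : V3) : E9 :=
  toE ((1 : Mat3) - (3 / ‖p‖ ^ 2 : ℝ) • Matrix.vecMulVec (fun i => p i) (fun i => p i))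

lemma hV_apply (p : V3) (i j : Fin 3) :
    hV p (i, j) = (1 : Mat3) i j - 3 / ‖p‖ ^ 2 * (p i * p j) := rfl

lemma hV_smul (t : ℝ) (ht : t ≠ 0) (p : V3) : hV (t • p) = hV p := by
  ext ⟨i, j⟩
  rw [hV_apply, hV_apply, norm_smul, mul_pow, Real.norm_eq_abs, sq_abs]
  simp only [PiLp.smul_apply, smul_eq_mul]
  by_cases hp : ‖p‖ = 0
  · simp [hp]
  · field_simp

lemma nsq (p : V3) : ‖p‖ ^ 2 = p 0 ^ 2 + p 1 ^ 2 + p 2 ^ 2 := by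
  rw [EuclideanSpace.norm_sq_eq]
  simp [Fin.sum_univ_three]

lemma hV_cont : Continuous fun p : {v : V3 // v ≠ 0} => hV p.1 := by
  unfold hV toE
  refine (PiLp.continuous_toLp 2 _).comp ?_
  refine continuous_pi fun ij => ?_
  simp only [Matrix.sub_apply, Matrix.smul_apply, Matrix.vecMulVec_apply, smul_eq_mul]
  have h1 : ∀ p : {v : V3 // v ≠ 0}, ‖p.1‖ ^ 2 ≠ 0 := fun p => by
    have := norm_ne_zero_iff.2 p.2
    positivity
  refine continuous_const.sub (Continuous.mul (Continuous.div continuous_const ?_ h1) ?_)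
  · fun_prop
  · fun_prop

def hP : Projectivization ℝ V3 → E9 :=
  Projectivization.lift (fun p => hV p.1) (by
    intro a b t h
    have ht : t ≠ 0 := by
      rintro rfl
      exact a.2 (by simpa using h)
    simp only [h]
    exact hV_smul t ht _)

lemma hP_mk (p : V3) (hp : p ≠ 0) : hP (Projectivization.mk ℝ p hp) = hV p := rfl

lemma hP_cont : Continuous hP := by
  unfold hP Projectivization.lift
  exact Continuous.quotient_lift hV_cont _

lemma mk_cont : Continuous fun p : {v : V3 // v ≠ 0} => Projectivization.mk ℝ p.1 p.2 :=
  continuous_quotient_mk'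

lemma exists_unit (x : Projectivization ℝ V3) :
    ∃ (p : V3) (hp : p ≠ 0), ‖p‖ = 1 ∧ x = Projectivization.mk ℝ p hp := by
  induction x using Projectivization.ind with
  | h v hv =>
    have hn := norm_ne_zero_iff.2 hv
    have h1 : ‖(‖v‖⁻¹ • v)‖ = 1 := by
      rw [norm_smul, norm_inv, norm_norm, inv_mul_cancel₀ hn]
    refine ⟨‖v‖⁻¹ • v, ?_, h1, ?_⟩
    · intro h
      simp [h] at h1
    · rw [Projectivization.mk_eq_mk_iff']
      exact ⟨‖v‖, by rw [smul_smul, mul_inv_cancel₀ hn, one_smul]⟩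

instance P_compact : CompactSpace (Projectivization ℝ V3) := by
  have hne : ∀ p : Metric.sphere (0 : V3) 1, p.1 ≠ 0 := fun p h => by
    have := p.2
    rw [mem_sphere_zero_iff_norm, h] at this
    simp at this
  let g : Metric.sphere (0 : V3) 1 → Projectivization ℝ V3 :=
    fun p => Projectivization.mk ℝ p.1 (hne p)
  have hg : Continuous g := mk_cont.comp
    (f := fun p : Metric.sphere (0 : V3) 1 => (⟨p.1, hne p⟩ : {v : V3 // v ≠ 0})) (by fun_prop)
  have hs : Function.Surjective g := by
    intro x
    obtain ⟨p, hp, h1, rfl⟩ := exists_unit x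
    exact ⟨⟨p, by simpa using h1⟩, rfl⟩
  exact hs.compactSpace hg

lemma hP_inj : Function.Injective hP := by
  intro x y h
  obtain ⟨p, hp, h1, rfl⟩ := exists_unit x
  obtain ⟨q, hq, h2, rfl⟩ := exists_unit y
  rw [hP_mk, hP_mk] at h
  have hij : ∀ i j, p i * p j = q i * q j := fun i j => by
    have := congrArg (fun A : E9 => A (i, j)) h
    simp only [hV_apply, h1, h2] at this
    linarith
  rw [Projectivization.mk_eq_mk_iff']
  refine ⟨p 0 * q 0 + p 1 * q 1 + p 2 * q 2, ?_⟩
  have := nsq p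
  rw [h1] at this
  ext i
  simp only [PiLp.smul_apply, smul_eq_mul]
  linear_combination (-p 0) * hij 0 i - p 1 * hij 1 i - p 2 * hij 2 i - p i * this

lemma hP_emb : Topology.IsEmbedding hP :=
  (hP_cont.isClosedEmbedding hP_inj).isEmbedding

lemma hP_norm (x : Projectivization ℝ V3) : ‖hP x‖ = √6 := by
  obtain ⟨p, hp, h1, rfl⟩ := exists_unit x
  rw [hP_mk, EuclideanSpace.norm_eq]
  congr 1
  have := nsq p
  rw [h1] at this
  simp [Fintype.sum_prod_type, Fin.sum_univ_three, hV_apply, h1, Matrix.one_apply]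
  have h0 : p 0 ^ 2 = 1 - p 1 ^ 2 - p 2 ^ 2 := by linarith
  ring_nf
  have h4 : p 0 ^ 4 = (1 - p 1 ^ 2 - p 2 ^ 2) ^ 2 := by rw [← h0]; ring
  rw [h4, h0]
  ring

lemma exists_perp (p : V3) (h : ‖p‖ = 1) : ∃ v w : Fin 3 → ℝ, unitVec v ∧ unitVec w ∧
    (∑ i, v i * w i) = 0 ∧ (∑ i, p i * v i) = 0 ∧ (∑ i, p i * w i) = 0 := by
  have hn := nsq p
  rw [h] at hn
  have key : ∃ a b c : ℝ, a ^ 2 + b ^ 2 + c ^ 2 = 1 ∧ p 0 * a + p 1 * b + p 2 * c = 0 := by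
    by_cases h0 : p 0 ^ 2 + p 1 ^ 2 = 0
    · have : p 0 = 0 := by nlinarith [sq_nonneg (p 0), sq_nonneg (p 1)]
      exact ⟨1, 0, 0, by norm_num, by simp [this]⟩
    · have hpos : 0 < p 0 ^ 2 + p 1 ^ 2 := lt_of_le_of_ne (by positivity) (Ne.symm h0)
      have hs := Real.sq_sqrt hpos.le
      have hs0 := (Real.sqrt_pos.2 hpos).ne'
      refine ⟨-p 1 / √(p 0 ^ 2 + p 1 ^ 2), p 0 / √(p 0 ^ 2 + p 1 ^ 2), 0, ?_, ?_⟩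
      · rw [div_pow, div_pow, hs]
        field_simp
        ring
      · field_simp
        ring
  obtain ⟨a, b, c, h1, h2⟩ := key
  refine ⟨![a, b, c], ![p 1 * c - p 2 * b, p 2 * a - p 0 * c, p 0 * b - p 1 * a], ?_, ?_, ?_, ?_, ?_⟩
  · simpa [unitVec, Fin.sum_univ_three] using h1
  · simp only [unitVec, Fin.sum_univ_three]
    simp
    linear_combination (p 0 ^ 2 + p 1 ^ 2 + p 2 ^ 2) * h1 - hn -
      (p 0 * a + p 1 * b + p 2 * c) * h2
  · simp [Fin.sum_univ_three]
    ring
  · simpa [Fin.sum_univ_three] using h2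
  · simp [Fin.sum_univ_three]
    ring

def QQ (s : ℝ) (p : Fin 3 → ℝ) : Mat3 := s • ((1 : Mat3) - (3 : ℝ) • Matrix.vecMulVec p p)

lemma QQ_mulVec (s : ℝ) (p u : Fin 3 → ℝ) (i : Fin 3) :
    (QQ s p).mulVec u i = s * (u i - 3 * p i * ∑ k, p k * u k) := by
  fin_cases i <;>
    simp [QQ, Matrix.mulVec, dotProduct, Fin.sum_univ_three, Matrix.vecMulVec_apply,
      Matrix.one_apply] <;> ring

lemma smul_hP (t : ℝ) (p : V3) (hp : p ≠ 0) (h : ‖p‖ = 1) :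
    Real.exp t • hP (Projectivization.mk ℝ p hp) = toE (QQ (Real.exp t) (fun i => p i)) := by
  rw [hP_mk]
  ext ⟨i, j⟩
  simp [hV_apply, toE_apply, QQ, h, Matrix.vecMulVec_apply]

lemma mem_C (x : Projectivization ℝ V3) (t : ℝ) :
    Real.exp t • hP x ∈ CsetE ∧ Real.exp t • hP x ≠ 0 := by
  constructor
  · obtain ⟨p, hp, h1, rfl⟩ := exists_unit x
    have hn := nsq p
    rw [h1] at hn
    rw [smul_hP _ _ _ h1]
    have hpos := Real.exp_pos t
    generalize Real.exp t = s at hpos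
    refine ⟨⟨?_, ?_⟩, ?_⟩
    · rw [toM_toE]
      ext i j
      simp [QQ, Matrix.vecMulVec_apply, Matrix.one_apply, eq_comm, mul_comm]
    · rw [toM_toE]
      simp [QQ, Matrix.trace, Fin.sum_univ_three, Matrix.vecMulVec_apply]
      linear_combination 3 * s * hn
    · rw [toM_toE]
      obtain ⟨v, w, hv, hw, hvw, hpv, hpw⟩ := exists_perp p h1
      refine ⟨s, v, w, hv, hw, hvw, ?_, ?_, ?_⟩
      · ext i
        rw [QQ_mulVec, hpv]
        simp
      · ext i
        rw [QQ_mulVec, hpw]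
        simp
      · intro μ u hu he
        have he' : ∀ i, s * (u i - 3 * p i * ∑ k, p k * u k) = μ * u i := fun i => by
          rw [← QQ_mulVec]
          exact congrFun he i
        by_cases hpu : (∑ k, p k * u k) = 0
        · obtain ⟨i, hi⟩ := Function.ne_iff.1 hu
          have := he' i
          rw [hpu] at this
          have : s = μ := mul_right_cancel₀ hi (by simpa using this)
          exact this.ge
        · have : μ = -2 * s := by
            apply mul_right_cancel₀ hpu
            have e0 := he' 0
            have e1 := he' 1
            have e2 := he' 2
            generalize hS : (∑ k, p k * u k) = S at *
            rw [Fin.sum_univ_three] at hS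
            linear_combination (-p 0) * e0 - p 1 * e1 - p 2 * e2 + (s - μ) * hS + 3 * s * S * hn
          linarith
  · intro h
    have := hP_norm x
    rcases smul_eq_zero.1 h with h | h
    · exact (Real.exp_pos t).ne' h
    · rw [h, norm_zero] at this
      have : (0 : ℝ) < √6 := by positivity
      linarith

lemma surj (A : E9) (hA : A ∈ CsetE) (h0 : A ≠ 0) :
    ∃ x t, Real.exp t • hP x = A := by
  obtain ⟨⟨hs, htr⟩, lam, v, w, hv, hw, hvw, ev, ew, hmax⟩ := hA
  have hs' : ∀ i j, toM A i j = toM A j i := fun i j => (hs.apply j i)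
  simp only [unitVec, Fin.sum_univ_three] at hv hw hvw
  have ev' : ∀ i, _ := fun i => congrFun ev i
  have ew' : ∀ i, _ := fun i => congrFun ew i
  simp only [Matrix.mulVec, dotProduct, Fin.sum_univ_three, Pi.smul_apply, smul_eq_mul] at ev' ew'
  simp only [Matrix.trace, Fin.sum_univ_three, Matrix.diag_apply] at htr
  have key : ∃ p : V3, p 0 ^ 2 + p 1 ^ 2 + p 2 ^ 2 = 1 ∧ toM A = QQ lam (fun i => p i) := by
    set p : Fin 3 → ℝ :=
      ![v 1 * w 2 - v 2 * w 1, v 2 * w 0 - v 0 * w 2, v 0 * w 1 - v 1 * w 0] with hpdef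
    have p0 : p 0 = v 1 * w 2 - v 2 * w 1 := rfl
    have p1 : p 1 = v 2 * w 0 - v 0 * w 2 := rfl
    have p2 : p 2 = v 0 * w 1 - v 1 * w 0 := rfl
    have hp : p 0 ^ 2 + p 1 ^ 2 + p 2 ^ 2 = 1 := by
      rw [p0, p1, p2]
      linear_combination (v 0 ^ 2 + v 1 ^ 2 + v 2 ^ 2) * hw + hv -
        (v 0 * w 0 + v 1 * w 1 + v 2 * w 2) * hvw
    have hpv : p 0 * v 0 + p 1 * v 1 + p 2 * v 2 = 0 := by
      rw [p0, p1, p2]; ring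
    have hpw : p 0 * w 0 + p 1 * w 1 + p 2 * w 2 = 0 := by
      rw [p0, p1, p2]; ring
    clear_value p
    have hU : (Matrix.of ![v, w, p] : Mat3) * (Matrix.of ![v, w, p])ᵀ = 1 := by
      ext i j
      fin_cases i <;> fin_cases j <;>
        simp [Matrix.mul_apply, Fin.sum_univ_three] <;> linarith
    have hU' := mul_eq_one_comm.1 hU
    have hI : ∀ i j, v i * v j + w i * w j + p i * p j = (1 : Mat3) i j := fun i j => by
      rw [← hU']
      simp [Matrix.mul_apply, Fin.sum_univ_three]
    obtain ⟨q, hq⟩ : ∃ q : Fin 3 → ℝ, ∀ i,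
      q i = toM A i 0 * p 0 + toM A i 1 * p 1 + toM A i 2 * p 2 := ⟨_, fun i => rfl⟩
    have hone : ∀ (x : Fin 3 → ℝ) i,
        x 0 * (1 : Mat3) 0 i + x 1 * (1 : Mat3) 1 i + x 2 * (1 : Mat3) 2 i = x i := by
      intro x i
      fin_cases i <;> simp [Matrix.one_apply]
    have hqv : q 0 * v 0 + q 1 * v 1 + q 2 * v 2 = 0 := by
      rw [hq, hq, hq, hs' 1 0, hs' 2 0, hs' 2 1]
      have e0 := ev' 0
      have e1 := ev' 1
      have e2 := ev' 2
      rw [hs' 1 0] at e1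
      rw [hs' 2 0, hs' 2 1] at e2
      linear_combination p 0 * e0 + p 1 * e1 + p 2 * e2 + lam * hpv
    have hqw : q 0 * w 0 + q 1 * w 1 + q 2 * w 2 = 0 := by
      rw [hq, hq, hq, hs' 1 0, hs' 2 0, hs' 2 1]
      have e0 := ew' 0
      have e1 := ew' 1
      have e2 := ew' 2
      rw [hs' 1 0] at e1
      rw [hs' 2 0, hs' 2 1] at e2
      linear_combination p 0 * e0 + p 1 * e1 + p 2 * e2 + lam * hpw
    have hqi : ∀ i, q i = (q 0 * p 0 + q 1 * p 1 + q 2 * p 2) * p i := fun i => by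
      have := hone q i
      rw [← hI, ← hI, ← hI] at this
      linear_combination v i * hqv + w i * hqw - this
    have hQ : ∀ i j, toM A i j = lam * (v i * v j) + lam * (w i * w j) + q i * p j := fun i j => by
      have := hone (fun k => toM A i k) j
      rw [← hI, ← hI, ← hI] at this
      rw [hq]
      linear_combination v j * ev' i + w j * ew' i - this
    have hc : q 0 * p 0 + q 1 * p 1 + q 2 * p 2 = -2 * lam := by
      have a0 := hQ 0 0
      have a1 := hQ 1 1
      have a2 := hQ 2 2
      linear_combination htr - a0 - a1 - a2 - lam * hv - lam * hw
    refine ⟨WithLp.toLp 2 p, hp, ?_⟩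
    ext i j
    rw [hQ, hqi, hc]
    simp only [QQ, Matrix.smul_apply, Matrix.sub_apply, Matrix.vecMulVec_apply, smul_eq_mul]
    rw [← hI]
    ring
  obtain ⟨p, hp, hQ⟩ := key
  have hn := nsq p
  rw [hp] at hn
  have hp1 : ‖p‖ = 1 := by
    have := norm_nonneg p
    nlinarith
  have hp0 : p ≠ 0 := by
    rintro rfl
    simp at hp1
  have hA' : A = toE (QQ lam (fun i => p i)) := by rw [← hQ]; rfl
  have hl : lam ≠ 0 := by
    rintro rfl
    apply h0
    rw [hA']
    ext ⟨i, j⟩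
    simp [toE_apply, QQ]
  have hle : -2 * lam ≤ lam := by
    apply hmax _ (fun i => p i)
    · intro h
      apply hp0
      ext i
      exact congrFun h i
    · ext i
      rw [hQ, QQ_mulVec, Fin.sum_univ_three]
      simp only [Pi.smul_apply, smul_eq_mul]
      linear_combination (-3 * lam * p i) * hp
  have hpos : 0 < lam := lt_of_le_of_ne (by linarith) (Ne.symm hl)
  refine ⟨Projectivization.mk ℝ p hp0, Real.log lam, ?_⟩
  rw [smul_hP _ _ _ hp1, Real.exp_log hpos, hA']

def FF (z : Projectivization ℝ V3 × ℝ) : {A : E9 // A ∈ CsetE ∧ A ≠ 0} :=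
  ⟨Real.exp z.2 • hP z.1, mem_C z.1 z.2⟩

lemma FF_exp (z : Projectivization ℝ V3 × ℝ) : Real.exp z.2 = ‖(FF z).1‖ / √6 := by
  have : (0 : ℝ) < √6 := by positivity
  simp only [FF]
  rw [norm_smul, hP_norm, Real.norm_eq_abs, abs_of_pos (Real.exp_pos _)]
  field_simp

lemma FF_log (z : Projectivization ℝ V3 × ℝ) : z.2 = Real.log (‖(FF z).1‖ / √6) := by
  rw [← FF_exp, Real.log_exp]

lemma FF_h (z : Projectivization ℝ V3 × ℝ) : hP z.1 = (‖(FF z).1‖ / √6)⁻¹ • (FF z).1 := by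
  rw [← FF_exp]
  simp only [FF]
  rw [smul_smul, inv_mul_cancel₀ (Real.exp_pos _).ne', one_smul]

lemma FF_bij : Function.Bijective FF := by
  constructor
  · intro a b h
    apply Prod.ext
    · apply hP_inj
      rw [FF_h, FF_h, h]
    · rw [FF_log, FF_log b, h]
  · rintro ⟨A, hA, h0⟩
    obtain ⟨x, t, h⟩ := surj A hA h0
    exact ⟨(x, t), Subtype.ext h⟩

def FH : (Projectivization ℝ V3 × ℝ) ≃ₜ {A : E9 // A ∈ CsetE ∧ A ≠ 0} where
  toEquiv := Equiv.ofBijective FF FF_bij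
  continuous_toFun := by
    refine Continuous.subtype_mk ?_ _
    exact (Real.continuous_exp.comp continuous_snd).smul (hP_cont.comp continuous_fst)
  continuous_invFun := by
    have hpos : ∀ A : {A : E9 // A ∈ CsetE ∧ A ≠ 0}, ‖A.1‖ / √6 ≠ 0 := fun A => by
      have := norm_pos_iff.2 A.2.2
      positivity
    have hc : Continuous fun A : {A : E9 // A ∈ CsetE ∧ A ≠ 0} => ‖A.1‖ / √6 := by fun_prop
    have hF : ∀ A, FF ((Equiv.ofBijective FF FF_bij).symm A) = A :=
      fun A => (Equiv.ofBijective FF FF_bij).apply_symm_apply A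
    refine continuous_prodMk.2 ⟨?_, ?_⟩ |>.congr (fun A => Prod.mk.eta)
    · rw [hP_emb.continuous_iff]
      refine ((hc.inv₀ hpos).smul continuous_subtype_val).congr fun A => ?_
      have := FF_h ((Equiv.ofBijective FF FF_bij).symm A)
      rw [hF] at this
      exact this.symm
    · refine (hc.log hpos).congr fun A => ?_
      have := FF_log ((Equiv.ofBijective FF FF_bij).symm A)
      rw [hF] at this
      exact this.symm

theorem statement19 :
    ∃ H : (Projectivization ℝ V3 × ℝ) ≃ₜ {A : E9 // A ∈ CsetE ∧ A ≠ 0},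
      ∀ (p : V3) (hp : p ≠ 0), ‖p‖ = 1 → ∀ t : ℝ,
        (H (Projectivization.mk ℝ p hp, t) : E9) =
          toE (Real.exp t •
            ((1 : Mat3) - (3 : ℝ) • Matrix.vecMulVec (fun i => p i) (fun i => p i))) := by
  refine ⟨FH, fun p hp h1 t => ?_⟩
  exact smul_hP t p hp h1
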